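/- If θ₁, θ₂, θ₃ ≥ 0 and θ₁ + θ₂ + θ₃ = π, then for any x₁, x₂, x₃ ∈ ℝ, letting (α₁, α₂, α₃) be the inner angles of the generalized Euclidean triangle of edge lengths e^{x₁}, e^{x₂}, e^{x₃} (with α_i opposite the edge of length e^{x_i}), one has Σ_{i=1}³ Λ(α_i) + Σ_{i=1}³ x_i(α_i − θ_i) ≥ Σ_{i=1}³ Λ(θ_i). -/

import Mathlib

/-- The Lobachevsky function `Λ(t) = -∫₀ᵗ log |2 sin s| ds`. -/
noncomputable def Lob (t : ℝ) : ℝ := -∫ s in (0 : ℝ)..t, Real.log |2 * Real.sin s|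

/-- The inner angle, opposite the edge of length `x i`, of the generalized Euclidean
triangle of edge lengths `x 0, x 1, x 2` (clamped arccos convention). -/
noncomputable def ang (i : Fin 3) (x : Fin 3 → ℝ) : ℝ :=
  Real.arccos (((x (i + 1)) ^ 2 + (x (i + 2)) ^ 2 - (x i) ^ 2) / (2 * x (i + 1) * x (i + 2)))

lemma aux_ii (a b : ℝ) :
    IntervalIntegrable (fun s => Real.log |2 * Real.sin s|) MeasureTheory.volume a b := by
  have h := MeromorphicOn.intervalIntegrable_log_norm (f := fun s : ℝ => 2 * Real.sin s)
    (a := a) (b := b) (by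
      intro x _
      apply AnalyticAt.meromorphicAt
      fun_prop)
  simpa [Real.norm_eq_abs] using h

lemma aux_cont : Continuous Lob := by
  unfold Lob
  exact (intervalIntegral.continuous_primitive (fun a b => aux_ii a b) 0).neg

lemma aux_deriv (t : ℝ) (ht : Real.sin t ≠ 0) :
    HasDerivAt Lob (-Real.log |2 * Real.sin t|) t := by
  unfold Lob
  apply HasDerivAt.neg
  have hc : ContinuousAt (fun s => Real.log |2 * Real.sin s|) t := by
    apply ContinuousAt.log
    · fun_prop
    · simpa using ht
  apply intervalIntegral.integral_hasDerivAt_right (aux_ii 0 t) _ hc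
  apply Measurable.stronglyMeasurable (by fun_prop) |>.stronglyMeasurableAtFilter

/-- the term along a segment -/
lemma aux_term (x a d t : ℝ) (h : Real.sin (a + t * d) ≠ 0 ∨ d = 0) :
    HasDerivAt (fun t => Lob (a + t * d) + x * (a + t * d))
      (d * (x - Real.log |2 * Real.sin (a + t * d)|)) t := by
  rcases h with h | h
  · have h1 : HasDerivAt (fun t : ℝ => a + t * d) d t := by
      simpa using ((hasDerivAt_id t).mul_const d).const_add a
    have h2 := (aux_deriv _ h).comp t h1
    have h3 := h2.add (h1.const_mul x)
    have e : d * (x - Real.log |2 * Real.sin (a + t * d)|) =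
        -Real.log |2 * Real.sin (a + t * d)| * d + x * d := by ring
    rw [e]
    exact h3
  · subst h
    simpa using hasDerivAt_const t (Lob a + x * a)

lemma aux_core (x0 x1 x2 a0 a1 a2 d0 d1 d2 : ℝ)
    (h0 : ∀ t ∈ Set.Ioo (0 : ℝ) 1, Real.sin (a0 + t * d0) ≠ 0 ∨ d0 = 0)
    (h1 : ∀ t ∈ Set.Ioo (0 : ℝ) 1, Real.sin (a1 + t * d1) ≠ 0 ∨ d1 = 0)
    (h2 : ∀ t ∈ Set.Ioo (0 : ℝ) 1, Real.sin (a2 + t * d2) ≠ 0 ∨ d2 = 0)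
    (hD : ∀ t ∈ Set.Ioo (0 : ℝ) 1,
      d0 * (x0 - Real.log |2 * Real.sin (a0 + t * d0)|) +
      d1 * (x1 - Real.log |2 * Real.sin (a1 + t * d1)|) +
      d2 * (x2 - Real.log |2 * Real.sin (a2 + t * d2)|) ≤ 0) :
    Lob (a0 + d0) + Lob (a1 + d1) + Lob (a2 + d2) + x0 * d0 + x1 * d1 + x2 * d2 ≤
      Lob a0 + Lob a1 + Lob a2 := by
  have hc := aux_cont
  have key : AntitoneOn (fun t => (Lob (a0 + t * d0) + x0 * (a0 + t * d0)) +
      (Lob (a1 + t * d1) + x1 * (a1 + t * d1)) + (Lob (a2 + t * d2) + x2 * (a2 + t * d2)))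
      (Set.Icc (0 : ℝ) 1) := by
    have hder : ∀ t ∈ Set.Ioo (0 : ℝ) 1, HasDerivAt (fun t =>
      (Lob (a0 + t * d0) + x0 * (a0 + t * d0)) +
      (Lob (a1 + t * d1) + x1 * (a1 + t * d1)) + (Lob (a2 + t * d2) + x2 * (a2 + t * d2)))
      (d0 * (x0 - Real.log |2 * Real.sin (a0 + t * d0)|) +
      d1 * (x1 - Real.log |2 * Real.sin (a1 + t * d1)|) +
      d2 * (x2 - Real.log |2 * Real.sin (a2 + t * d2)|)) t := fun t ht =>
        ((aux_term x0 a0 d0 t (h0 t ht)).add (aux_term x1 a1 d1 t (h1 t ht))).add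
          (aux_term x2 a2 d2 t (h2 t ht))
    apply antitoneOn_of_deriv_nonpos (convex_Icc 0 1)
    · apply Continuous.continuousOn
      fun_prop
    · rw [interior_Icc]
      intro t ht
      exact (hder t ht).differentiableAt.differentiableWithinAt
    · rw [interior_Icc]
      intro t ht
      rw [(hder t ht).deriv]
      exact hD t ht
  have := key (by simp : (0 : ℝ) ∈ Set.Icc (0 : ℝ) 1) (by simp : (1 : ℝ) ∈ Set.Icc (0 : ℝ) 1)
    zero_le_one
  simp only [zero_mul, one_mul, add_zero] at this
  linarith

lemma aux_sub (t d e y : ℝ) (ht : 0 < t) (he : 0 ≤ e) (hed : e ≤ d) (hd : t * d < Real.pi) :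
    e * (y + Real.log |2 * Real.sin (t * d)| - Real.log |2 * Real.sin (t * e)|) ≤
      Real.exp y * d - e := by
  rcases he.eq_or_lt with rfl | he
  · have := Real.exp_pos y
    simp
    positivity
  have hdp : 0 < d := by linarith
  have h1 : 0 < Real.sin (t * d) := Real.sin_pos_of_pos_of_lt_pi (by positivity) hd
  have h2 : 0 < Real.sin (t * e) := Real.sin_pos_of_pos_of_lt_pi (by positivity) (by nlinarith)
  have hconc : e * Real.sin (t * d) ≤ d * Real.sin (t * e) := by
    have := strictConcaveOn_sin_Icc.concaveOn.2
      (show (0 : ℝ) ∈ Set.Icc 0 Real.pi from ⟨le_rfl, Real.pi_pos.le⟩)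
      (show t * d ∈ Set.Icc 0 Real.pi from ⟨by positivity, hd.le⟩)
      (show 0 ≤ 1 - e / d by rw [sub_nonneg, div_le_one hdp]; exact hed) (show 0 ≤ e / d by positivity) (by ring)
    simp only [smul_eq_mul, Real.sin_zero, mul_zero, zero_add] at this
    rw [show e / d * (t * d) = t * e by field_simp] at this
    rw [div_mul_eq_mul_div, div_le_iff₀ hdp] at this
    linarith
  rw [abs_of_pos (by positivity), abs_of_pos (by positivity),
    Real.log_mul (by norm_num) h1.ne', Real.log_mul (by norm_num) h2.ne']
  have hlog : Real.log (Real.sin (t * d)) - Real.log (Real.sin (t * e)) ≤ Real.log (d / e) := by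
    rw [← Real.log_div h1.ne' h2.ne']
    apply Real.log_le_log (by positivity)
    rw [div_le_div_iff₀ h2 he]
    linarith
  have hz := Real.log_le_sub_one_of_pos (x := Real.exp y * (d / e)) (by positivity)
  rw [Real.log_mul (Real.exp_pos y).ne' (by positivity), Real.log_exp] at hz
  have h3 : e * (Real.exp y * (d / e) - 1) = Real.exp y * d - e := by field_simp
  rw [← h3]
  apply mul_le_mul_of_nonneg_left _ he.le
  linarith

lemma aux_deg (x0 x1 x2 θ0 θ1 θ2 : ℝ) (p0 : 0 ≤ θ0) (p1 : 0 ≤ θ1) (p2 : 0 ≤ θ2)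
    (hs : θ0 + θ1 + θ2 = Real.pi) (hx : Real.exp x1 + Real.exp x2 ≤ Real.exp x0) :
    Lob θ0 + Lob θ1 + Lob θ2 ≤ Lob Real.pi + Lob 0 + Lob 0 +
      (x0 * (Real.pi - θ0) + x1 * (0 - θ1) + x2 * (0 - θ2)) := by
  have hpi := Real.pi_pos
  have hsin : ∀ e : ℝ, 0 ≤ e → e ≤ θ1 + θ2 → ∀ t ∈ Set.Ioo (0 : ℝ) 1,
      Real.sin (t * e) ≠ 0 ∨ e = 0 := by
    intro e he hed t ht
    rcases he.eq_or_lt with h | h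
    · right; exact h.symm
    · left
      have := ht.1
      have := ht.2
      exact (Real.sin_pos_of_pos_of_lt_pi (by positivity) (by nlinarith)).ne'
  have hrefl : ∀ t : ℝ, Real.sin (Real.pi + t * (-(θ1 + θ2))) = Real.sin (t * (θ1 + θ2)) := by
    intro t
    rw [← Real.sin_pi_sub]
    congr 1
    ring
  have := aux_core x0 x1 x2 Real.pi 0 0 (-(θ1 + θ2)) θ1 θ2
    (by
      intro t ht
      rw [hrefl, neg_eq_zero]
      exact hsin _ (by positivity) le_rfl t ht)
    (by
      intro t ht
      rw [zero_add]
      exact hsin _ p1 (by linarith) t ht)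
    (by
      intro t ht
      rw [zero_add]
      exact hsin _ p2 (by linarith) t ht)
    (by
      intro t ht
      rw [hrefl, zero_add, zero_add]
      have hlt : t * (θ1 + θ2) < Real.pi := by
        rcases (add_nonneg p1 p2).eq_or_lt with h | h
        · rw [← h]; simpa using hpi
        · nlinarith [ht.1, ht.2]
      have e1 := aux_sub t (θ1 + θ2) θ1 (x1 - x0) ht.1 p1 (by linarith) hlt
      have e2 := aux_sub t (θ1 + θ2) θ2 (x2 - x0) ht.1 p2 (by linarith) hlt
      have e3 : Real.exp (x1 - x0) + Real.exp (x2 - x0) ≤ 1 := by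
        rw [Real.exp_sub, Real.exp_sub, ← add_div, div_le_one (Real.exp_pos _)]
        exact hx
      have e4 := mul_le_mul_of_nonneg_right e3 (add_nonneg p1 p2)
      linarith)
  rw [show Real.pi + -(θ1 + θ2) = θ0 by linarith, zero_add, zero_add] at this
  have e : Real.pi - θ0 = θ1 + θ2 := by linarith
  rw [e]
  linarith

lemma aux_cot (b0 b1 b2 d0 d1 d2 : ℝ) (p0 : 0 < Real.sin b0) (p1 : 0 < Real.sin b1)
    (p2 : 0 < Real.sin b2) (hb : b0 + b1 + b2 = Real.pi) (hd : d0 + d1 + d2 = 0) :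
    0 ≤ d0 * (Real.cos b0 * d0 / Real.sin b0) + d1 * (Real.cos b1 * d1 / Real.sin b1) +
      d2 * (Real.cos b2 * d2 / Real.sin b2) := by
  have hs : Real.sin b2 = Real.sin b0 * Real.cos b1 + Real.cos b0 * Real.sin b1 := by
    rw [show b2 = Real.pi - (b0 + b1) by linarith, Real.sin_pi_sub, Real.sin_add]
  have hc : Real.cos b2 = Real.sin b0 * Real.sin b1 - Real.cos b0 * Real.cos b1 := by
    rw [show b2 = Real.pi - (b0 + b1) by linarith, Real.cos_pi_sub, Real.cos_add]
    ring
  set c0 := Real.cos b0 / Real.sin b0 with hc0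
  set c1 := Real.cos b1 / Real.sin b1 with hc1
  set c2 := Real.cos b2 / Real.sin b2 with hc2
  have hsum : c0 + c1 = Real.sin b2 / (Real.sin b0 * Real.sin b1) := by
    rw [hc0, hc1, hs]; field_simp; ring
  have hpos : 0 < c0 + c1 := by rw [hsum]; positivity
  have hrel : (c0 + c1) * c2 = 1 - c0 * c1 := by
    rw [hsum, hc2, hc, hc0, hc1]; field_simp
  have hQ : d0 * (Real.cos b0 * d0 / Real.sin b0) + d1 * (Real.cos b1 * d1 / Real.sin b1) +
      d2 * (Real.cos b2 * d2 / Real.sin b2) = c0 * d0 ^ 2 + c1 * d1 ^ 2 + c2 * d2 ^ 2 := by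
    rw [hc0, hc1, hc2]; ring
  rw [hQ]
  have hd1 : d1 = -(d0 + d2) := by linarith
  have : (c0 + c1) * (c0 * d0 ^ 2 + c1 * d1 ^ 2 + c2 * d2 ^ 2) =
      ((c0 + c1) * d0 + c1 * d2) ^ 2 + d2 ^ 2 := by
    rw [hd1]
    linear_combination d2 ^ 2 * hrel
  by_contra hneg
  push Not at hneg
  have := mul_neg_of_pos_of_neg hpos hneg
  nlinarith [sq_nonneg ((c0 + c1) * d0 + c1 * d2), sq_nonneg d2]

lemma aux_nondeg (x0 x1 x2 a0 a1 a2 θ0 θ1 θ2 k : ℝ) (p0 : 0 ≤ θ0) (p1 : 0 ≤ θ1) (p2 : 0 ≤ θ2)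
    (hs : θ0 + θ1 + θ2 = Real.pi) (q0 : 0 < a0) (q1 : 0 < a1) (q2 : 0 < a2)
    (ha : a0 + a1 + a2 = Real.pi) (hx0 : x0 = k + Real.log (Real.sin a0))
    (hx1 : x1 = k + Real.log (Real.sin a1)) (hx2 : x2 = k + Real.log (Real.sin a2)) :
    Lob θ0 + Lob θ1 + Lob θ2 ≤ Lob a0 + Lob a1 + Lob a2 +
      (x0 * (a0 - θ0) + x1 * (a1 - θ1) + x2 * (a2 - θ2)) := by
  have hpos : ∀ a θ : ℝ, 0 < a → a < Real.pi → 0 ≤ θ → θ ≤ Real.pi → ∀ t ∈ Set.Ico (0 : ℝ) 1,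
      0 < Real.sin (a + t * (θ - a)) := by
    intro a θ h1 h2 h3 h4 t ht
    obtain ⟨ht0, ht1⟩ := ht
    apply Real.sin_pos_of_pos_of_lt_pi
    · nlinarith [mul_nonneg ht0 h3, mul_pos (sub_pos.2 ht1) h1]
    · nlinarith [mul_nonneg ht0 (sub_nonneg.2 h4), mul_pos (sub_pos.2 ht1) (sub_pos.2 h2)]
  have s0 := hpos a0 θ0 q0 (by linarith) p0 (by linarith)
  have s1 := hpos a1 θ1 q1 (by linarith) p1 (by linarith)
  have s2 := hpos a2 θ2 q2 (by linarith) p2 (by linarith)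
  have hmono : MonotoneOn (fun t => (θ0 - a0) * Real.log (Real.sin (a0 + t * (θ0 - a0))) +
      (θ1 - a1) * Real.log (Real.sin (a1 + t * (θ1 - a1))) +
      (θ2 - a2) * Real.log (Real.sin (a2 + t * (θ2 - a2)))) (Set.Ico (0 : ℝ) 1) := by
    have hd1 : ∀ a d t : ℝ, 0 < Real.sin (a + t * d) →
        HasDerivAt (fun t => d * Real.log (Real.sin (a + t * d)))
        (d * (Real.cos (a + t * d) * d / Real.sin (a + t * d))) t := by
      intro a d t h
      have h1 : HasDerivAt (fun t : ℝ => a + t * d) d t := by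
        simpa using ((hasDerivAt_id t).mul_const d).const_add a
      exact (h1.sin.log h.ne').const_mul d
    have hder := fun t (ht : t ∈ Set.Ico (0 : ℝ) 1) =>
      ((hd1 a0 (θ0 - a0) t (s0 t ht)).add (hd1 a1 (θ1 - a1) t (s1 t ht))).add
        (hd1 a2 (θ2 - a2) t (s2 t ht))
    apply monotoneOn_of_deriv_nonneg (convex_Ico 0 1)
    · intro t ht
      exact (hder t ht).continuousAt.continuousWithinAt
    · intro t ht
      exact (hder t (interior_subset ht)).differentiableAt.differentiableWithinAt
    · intro t ht
      have ht' := interior_subset ht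
      have e := (hder t ht').deriv
      refine le_of_le_of_eq ?_ e.symm
      apply aux_cot _ _ _ _ _ _ (s0 t ht') (s1 t ht') (s2 t ht')
      · linear_combination (1 - t) * ha + t * hs
      · linarith
  have := aux_core x0 x1 x2 a0 a1 a2 (θ0 - a0) (θ1 - a1) (θ2 - a2)
    (fun t ht => Or.inl (s0 t ⟨ht.1.le, ht.2⟩).ne')
    (fun t ht => Or.inl (s1 t ⟨ht.1.le, ht.2⟩).ne')
    (fun t ht => Or.inl (s2 t ⟨ht.1.le, ht.2⟩).ne')
    (by
      intro t ht
      have ht' : t ∈ Set.Ico (0 : ℝ) 1 := ⟨ht.1.le, ht.2⟩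
      have hm := hmono (by simp : (0 : ℝ) ∈ Set.Ico (0 : ℝ) 1) ht' ht.1.le
      simp only [zero_mul, add_zero] at hm
      have hl : ∀ u : ℝ, 0 < u → Real.log |2 * u| = Real.log 2 + Real.log u := by
        intro u hu
        rw [abs_of_pos (by positivity), Real.log_mul (by norm_num) hu.ne']
      rw [hl _ (s0 t ht'), hl _ (s1 t ht'), hl _ (s2 t ht'), hx0, hx1, hx2]
      have hz : (k - Real.log 2) * ((θ0 - a0) + (θ1 - a1) + (θ2 - a2)) = 0 := by
        rw [show (θ0 - a0) + (θ1 - a1) + (θ2 - a2) = 0 by linarith, mul_zero]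
      linarith)
  simp only [add_sub_cancel] at this
  linarith

/-- angle opposite `a` -/
noncomputable def auxTri (a b c : ℝ) : ℝ := Real.arccos ((b ^ 2 + c ^ 2 - a ^ 2) / (2 * b * c))

lemma aux_tri_pi (a b c : ℝ) (hb : 0 < b) (hc : 0 < c) (h : b + c ≤ a) :
    auxTri a b c = Real.pi := by
  apply Real.arccos_of_le_neg_one
  rw [div_le_iff₀ (by positivity)]
  nlinarith

lemma aux_tri_zero (a b c : ℝ) (ha : 0 < a) (hb : 0 < b) (hc : 0 < c)
    (h : a + b ≤ c ∨ a + c ≤ b) : auxTri a b c = 0 := by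
  apply Real.arccos_of_one_le
  rw [le_div_iff₀ (by positivity)]
  rcases h with h | h <;> nlinarith

lemma aux_tri_cos (a b c : ℝ) (hb : 0 < b) (hc : 0 < c)
    (h1 : a < b + c) (h2 : b < c + a) (h3 : c < a + b) :
    Real.cos (auxTri a b c) = (b ^ 2 + c ^ 2 - a ^ 2) / (2 * b * c) := by
  apply Real.cos_arccos
  · rw [le_div_iff₀ (by positivity)]; nlinarith
  · rw [div_le_iff₀ (by positivity)]; nlinarith

/-- sixteen times the squared area -/
noncomputable def auxS (a b c : ℝ) : ℝ := (a + b + c) * (b + c - a) * (c + a - b) * (a + b - c)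

lemma aux_tri_sin (a b c : ℝ) (ha : 0 < a) (hb : 0 < b) (hc : 0 < c)
    (h1 : a < b + c) (h2 : b < c + a) (h3 : c < a + b) :
    Real.sin (auxTri a b c) = a * (Real.sqrt (auxS a b c) / (2 * a * b * c)) := by
  have hS : 0 < auxS a b c := by
    unfold auxS
    have := sub_pos.2 h1
    have := sub_pos.2 h2
    have := sub_pos.2 h3
    positivity
  unfold auxTri
  rw [Real.sin_arccos]
  rw [Real.sqrt_eq_iff_mul_self_eq_of_pos (by positivity)]
  have := Real.mul_self_sqrt hS.le
  have e : a * (Real.sqrt (auxS a b c) / (2 * a * b * c)) *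
      (a * (Real.sqrt (auxS a b c) / (2 * a * b * c))) =
      auxS a b c / (2 * b * c) ^ 2 := by
    field_simp
    linarith
  rw [e]
  unfold auxS
  field_simp
  ring

lemma aux_tri_sum (a b c : ℝ) (ha : 0 < a) (hb : 0 < b) (hc : 0 < c)
    (h1 : a < b + c) (h2 : b < c + a) (h3 : c < a + b) :
    auxTri a b c + auxTri b c a + auxTri c a b = Real.pi := by
  have hS : 0 < auxS a b c := by
    unfold auxS
    have := sub_pos.2 h1
    have := sub_pos.2 h2
    have := sub_pos.2 h3
    positivity
  have sq := Real.mul_self_sqrt hS.le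
  have S1 : auxS b c a = auxS a b c := by unfold auxS; ring
  have S2 : auxS c a b = auxS a b c := by unfold auxS; ring
  have sa := aux_tri_sin a b c ha hb hc h1 h2 h3
  have sb := aux_tri_sin b c a hb hc ha h2 h3 h1
  have sc := aux_tri_sin c a b hc ha hb h3 h1 h2
  have ca := aux_tri_cos a b c hb hc h1 h2 h3
  have cb := aux_tri_cos b c a hc ha h2 h3 h1
  have cc := aux_tri_cos c a b ha hb h3 h1 h2
  rw [S1] at sb
  rw [S2] at sc
  have hsq := Real.sqrt_pos.2 hS
  have hsin : Real.sin (auxTri a b c + auxTri b c a) = Real.sin (auxTri c a b) := by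
    rw [Real.sin_add, sa, sb, sc, ca, cb]
    field_simp
    ring
  have hcos : Real.cos (auxTri a b c + auxTri b c a) = Real.cos (Real.pi - auxTri c a b) := by
    rw [Real.cos_pi_sub, Real.cos_add, sa, sb, ca, cb, cc]
    have e : a * (Real.sqrt (auxS a b c) / (2 * a * b * c)) *
      (b * (Real.sqrt (auxS a b c) / (2 * b * c * a))) =
      auxS a b c / (4 * a * b * c ^ 2) := by
      field_simp
      linarith
    rw [e]
    unfold auxS
    field_simp
    ring
  have hscp : 0 < Real.sin (auxTri c a b) := by rw [sc]; positivity
  have n0 : 0 ≤ auxTri a b c := Real.arccos_nonneg _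
  have n1 : 0 ≤ auxTri b c a := Real.arccos_nonneg _
  have n2 : 0 ≤ auxTri c a b := Real.arccos_nonneg _
  have m0 : auxTri a b c ≤ Real.pi := Real.arccos_le_pi _
  have m1 : auxTri b c a ≤ Real.pi := Real.arccos_le_pi _
  have m2 : auxTri c a b ≤ Real.pi := Real.arccos_le_pi _
  have hle : auxTri a b c + auxTri b c a ≤ Real.pi := by
    by_contra hgt
    push Not at hgt
    have : 0 ≤ Real.sin (auxTri a b c + auxTri b c a - Real.pi) :=
      Real.sin_nonneg_of_nonneg_of_le_pi (by linarith) (by linarith)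
    rw [Real.sin_sub_pi, hsin] at this
    linarith
  have := Real.injOn_cos ⟨add_nonneg n0 n1, hle⟩ ⟨by linarith, by linarith⟩ hcos
  linarith

lemma aux_tri_log (x a s k : ℝ) (hk : 0 < k) (ha : a = Real.exp x) (h : s = a * k) :
    x = -Real.log k + Real.log s := by
  rw [h, ha, Real.log_mul (Real.exp_pos _).ne' hk.ne', Real.log_exp]
  ring

lemma aux_tri_pos (a b c : ℝ) (h : 0 < Real.sin (auxTri a b c)) : 0 < auxTri a b c := by
  rcases (Real.arccos_nonneg ((b ^ 2 + c ^ 2 - a ^ 2) / (2 * b * c))).eq_or_lt with h0 | h0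
  · have : auxTri a b c = 0 := h0.symm
    rw [this] at h
    simp at h
  · exact h0

theorem stmt7 (θ : Fin 3 → ℝ) (hθ : ∀ i, 0 ≤ θ i)
    (hsum : θ 0 + θ 1 + θ 2 = Real.pi) (x : Fin 3 → ℝ) :
    ∑ i : Fin 3, Lob (θ i) ≤
      ∑ i : Fin 3, Lob (ang i (fun m => Real.exp (x m))) +
        ∑ i : Fin 3, x i * (ang i (fun m => Real.exp (x m)) - θ i) := by
  have A0 : ang 0 (fun m => Real.exp (x m)) =
    auxTri (Real.exp (x 0)) (Real.exp (x 1)) (Real.exp (x 2)) := rfl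
  have A1 : ang 1 (fun m => Real.exp (x m)) =
    auxTri (Real.exp (x 1)) (Real.exp (x 2)) (Real.exp (x 0)) := rfl
  have A2 : ang 2 (fun m => Real.exp (x m)) =
    auxTri (Real.exp (x 2)) (Real.exp (x 0)) (Real.exp (x 1)) := rfl
  rw [Fin.sum_univ_three, Fin.sum_univ_three, Fin.sum_univ_three, A0, A1, A2]
  have t0 := hθ 0
  have t1 := hθ 1
  have t2 := hθ 2
  have E0 := Real.exp_pos (x 0)
  have E1 := Real.exp_pos (x 1)
  have E2 := Real.exp_pos (x 2)
  by_cases h0 : Real.exp (x 1) + Real.exp (x 2) ≤ Real.exp (x 0)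
  · rw [aux_tri_pi _ _ _ E1 E2 h0, aux_tri_zero _ _ _ E1 E2 E0 (Or.inl h0),
      aux_tri_zero _ _ _ E2 E0 E1 (Or.inr (by linarith))]
    have := aux_deg (x 0) (x 1) (x 2) (θ 0) (θ 1) (θ 2) t0 t1 t2 hsum h0
    linarith
  by_cases h1 : Real.exp (x 2) + Real.exp (x 0) ≤ Real.exp (x 1)
  · rw [aux_tri_pi _ _ _ E2 E0 h1, aux_tri_zero _ _ _ E2 E0 E1 (Or.inl h1),
      aux_tri_zero _ _ _ E0 E1 E2 (Or.inr (by linarith))]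
    have := aux_deg (x 1) (x 2) (x 0) (θ 1) (θ 2) (θ 0) t1 t2 t0 (by linarith) h1
    linarith
  by_cases h2 : Real.exp (x 0) + Real.exp (x 1) ≤ Real.exp (x 2)
  · rw [aux_tri_pi _ _ _ E0 E1 h2, aux_tri_zero _ _ _ E0 E1 E2 (Or.inl h2),
      aux_tri_zero _ _ _ E1 E2 E0 (Or.inr (by linarith))]
    have := aux_deg (x 2) (x 0) (x 1) (θ 2) (θ 0) (θ 1) t2 t0 t1 (by linarith) h2
    linarith
  push Not at h0 h1 h2
  have hsm := aux_tri_sum _ _ _ E0 E1 E2 h0 h1 h2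
  have sa := aux_tri_sin _ _ _ E0 E1 E2 h0 h1 h2
  have sb := aux_tri_sin _ _ _ E1 E2 E0 h1 h2 h0
  have sc := aux_tri_sin _ _ _ E2 E0 E1 h2 h0 h1
  generalize ha : Real.exp (x 0) = a at *
  generalize hb : Real.exp (x 1) = b at *
  generalize hc : Real.exp (x 2) = c at *
  have hS : 0 < auxS a b c := by
    unfold auxS
    have := sub_pos.2 h0
    have := sub_pos.2 h1
    have := sub_pos.2 h2
    positivity
  have hsq := Real.sqrt_pos.2 hS
  have S1 : auxS b c a = auxS a b c := by unfold auxS; ring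
  have S2 : auxS c a b = auxS a b c := by unfold auxS; ring
  rw [S1, show 2 * b * c * a = 2 * a * b * c by ring] at sb
  rw [S2, show 2 * c * a * b = 2 * a * b * c by ring] at sc
  have hk : 0 < Real.sqrt (auxS a b c) / (2 * a * b * c) := by positivity
  have := aux_nondeg (x 0) (x 1) (x 2) (auxTri a b c) (auxTri b c a) (auxTri c a b)
    (θ 0) (θ 1) (θ 2) (-Real.log (Real.sqrt (auxS a b c) / (2 * a * b * c)))
    t0 t1 t2 hsum
    (aux_tri_pos _ _ _ (by rw [sa]; positivity)) (aux_tri_pos _ _ _ (by rw [sb]; positivity))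
    (aux_tri_pos _ _ _ (by rw [sc]; positivity)) hsm
    (aux_tri_log _ _ _ _ hk ha.symm sa) (aux_tri_log _ _ _ _ hk hb.symm sb)
    (aux_tri_log _ _ _ _ hk hc.symm sc)
  linarith
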